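/- Let V be a finite-dimensional real vector space and (A, ω) a k-contact linear structure on V. Then the restriction of ω to ker A is non-degenerate: if v ∈ ker A satisfies ω(v, w) = 0 for all w ∈ ker A, then v = 0. (Pointwise form of the proposition that the kernel of a k-contact form is maximally non-integrable, i.e. dη is non-degenerate on ker η.) -/

import Mathlib

/-!
Write `U = ker A`. A dimension count turns `U ∩ ker ω = 0` into `V = U ⊕ ker ω`. Pairing with
`ker ω` gives zero, so a vector orthogonal to `U` is orthogonal to all of `V`: the orthogonal
complement of `U` is `ker ω`, which meets `U` trivially.
-/

theorem isCompl_of_disjoint_of_finrank_quotient_le {K V : Type*} [DivisionRing K] [AddCommGroup V]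
    [Module K V] {U W : Submodule K V} [FiniteDimensional K (V ⧸ U)] (hUW : Disjoint U W)
    (hdim : Module.finrank K (V ⧸ U) ≤ Module.finrank K W) : IsCompl U W := by
  have hinj : Function.Injective (U.mkQ.domRestrict W) := by
    rw [LinearMap.injective_domRestrict_iff, U.ker_mkQ]
    exact hUW.symm
  have hsurj : Function.Surjective (U.mkQ.domRestrict W) := by
    rw [← LinearMap.range_eq_top]
    refine Submodule.eq_top_of_finrank_eq (le_antisymm (Submodule.finrank_le _) ?_)
    rwa [LinearMap.finrank_range_of_inj hinj]
  rw [LinearMap.surjective_domRestrict_iff U.mkQ_surjective, U.ker_mkQ] at hsurj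
  exact ⟨hUW, hsurj.symm⟩

theorem orthogonalBilin_eq_ker_flip_of_codisjoint_ker {R R₁ R₂ M M₁ M₂ : Type*}
    [CommSemiring R] [CommSemiring R₁] [CommSemiring R₂] [AddCommMonoid M] [Module R M]
    [AddCommMonoid M₁] [Module R₁ M₁] [AddCommMonoid M₂] [Module R₂ M₂]
    {I₁ : R₁ →+* R} {I₂ : R₂ →+* R} {B : M₁ →ₛₗ[I₁] M₂ →ₛₗ[I₂] M} {U : Submodule R₁ M₁}
    (hU : Codisjoint U (LinearMap.ker B)) :
    U.orthogonalBilin B = LinearMap.ker B.flip := by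
  refine le_antisymm (fun v hv ↦ ?_) fun v hv u _ ↦ LinearMap.congr_fun hv u
  have hsup : U ⊔ LinearMap.ker B ≤ LinearMap.ker (B.flip v) :=
    sup_le hv fun r hr ↦ LinearMap.congr_fun hr v
  rwa [hU.eq_top, top_le_iff, LinearMap.ker_eq_top] at hsup

theorem stmt_1_general {K V W : Type*} [Field K] [AddCommGroup V] [Module K V] [AddCommGroup W]
    [Module K W] {U : Submodule K V} [FiniteDimensional K (V ⧸ U)] {ω : V →ₗ[K] V →ₗ[K] W}
    (hω : ω.IsRefl) (hdim : Module.finrank K (V ⧸ U) ≤ Module.finrank K (LinearMap.ker ω))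
    (hdisj : Disjoint U (LinearMap.ker ω)) : (ω.domRestrict₁₂ U U).Nondegenerate := by
  have hcompl : IsCompl U (LinearMap.ker ω) :=
    isCompl_of_disjoint_of_finrank_quotient_le hdisj hdim
  apply LinearMap.nondegenerate_restrict_of_disjoint_orthogonal hω
  rwa [orthogonalBilin_eq_ker_flip_of_codisjoint_ker hcompl.codisjoint, hω.ker_flip]

/-- **Maximal non-integrability (pointwise form).** For a k-contact linear structure
`(A, ω)` on a finite-dimensional real vector space `V` (i.e. `A : V → ℝ^k` linear,
`ω : V × V → ℝ^k` alternating bilinear, `ker A` nonzero of codimension `k`,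
`ker ω` of dimension `k`, and `ker A ∩ ker ω = 0`), the restriction of `ω` to
`ker A` is non-degenerate: if `v ∈ ker A` satisfies `ω(v, w) = 0` for all
`w ∈ ker A`, then `v = 0`. -/
theorem stmt_1 (k : ℕ) (V : Type*) [AddCommGroup V] [Module ℝ V]
    [FiniteDimensional ℝ V]
    (A : V →ₗ[ℝ] (Fin k → ℝ)) (ω : V →ₗ[ℝ] V →ₗ[ℝ] (Fin k → ℝ))
    (hAlt : ∀ v : V, ω v v = 0)
    (hkerA_ne : LinearMap.ker A ≠ ⊥)
    (hcodim : Module.finrank ℝ V = Module.finrank ℝ (LinearMap.ker A) + k)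
    (hkerω : Module.finrank ℝ (LinearMap.ker ω) = k)
    (hint : LinearMap.ker A ⊓ LinearMap.ker ω = ⊥) :
    ∀ v ∈ LinearMap.ker A, (∀ w ∈ LinearMap.ker A, ω v w = 0) → v = 0 := by
  have hdim := (LinearMap.ker A).finrank_quotient_add_finrank
  have hnondeg := stmt_1_general (LinearMap.IsAlt.isRefl hAlt) (by lia) (disjoint_iff.mpr hint)
  exact fun v hv hvA ↦ congrArg Subtype.val (hnondeg.1 ⟨v, hv⟩ fun w ↦ hvA w w.2)
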